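/- Let d and d_F be positive integers. Let σ : ℝ → ℝ be 1-Lipschitz with σ(0) = 0, applied elementwise to vectors. Define LN : ℝ^d → ℝ^d by LN(x) = x if ‖x‖₂ ≤ 1 and LN(x) = x/‖x‖₂ otherwise, and define the feed-forward map ffn(x, A₁, A₂) = σ(LN(x) A₁) A₂ for x ∈ ℝ^d (viewed as a row vector), A₁ ∈ ℝ^{d×d_F}, A₂ ∈ ℝ^{d_F×d}. Then for any x, x̃ ∈ ℝ^d and any A₁, Ã₁ ∈ ℝ^{d×d_F}, A₂, Ã₂ ∈ ℝ^{d_F×d}: ‖ffn(x, A₁, A₂) − ffn(x̃, Ã₁, Ã₂)‖₂ ≤ ‖A₁‖_F·‖A₂‖_F·‖x − x̃‖₂ + ‖A₁ − Ã₁‖_F·‖A₂‖_F·‖x̃‖₂ + ‖Ã₁‖_F·‖A₂ − Ã₂‖_F·‖x̃‖₂. -/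

import Mathlib

open scoped BigOperators

/-- Euclidean (ℓ₂) norm of a finite real vector. -/
noncomputable def l2norm {n : ℕ} (v : Fin n → ℝ) : ℝ :=
  Real.sqrt (∑ i, v i ^ 2)

/-- Frobenius norm of a real matrix. -/
noncomputable def frobNorm {m n : ℕ} (A : Matrix (Fin m) (Fin n) ℝ) : ℝ :=
  Real.sqrt (∑ i, ∑ j, A i j ^ 2)

/-- Row-wise normalization: projection onto the closed Euclidean unit ball. -/
noncomputable def LN {n : ℕ} (x : Fin n → ℝ) : Fin n → ℝ :=
  if l2norm x ≤ 1 then x else (l2norm x)⁻¹ • x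

/-- The feed-forward map `ffn(x, A₁, A₂) = σ(LN(x) A₁) A₂`, with `x` a row vector
and `σ` applied elementwise. -/
noncomputable def ffn {d dF : ℕ} (σ : ℝ → ℝ) (x : Fin d → ℝ)
    (A₁ : Matrix (Fin d) (Fin dF) ℝ) (A₂ : Matrix (Fin dF) (Fin d) ℝ) :
    Fin d → ℝ :=
  Matrix.vecMul (fun i => σ (Matrix.vecMul (LN x) A₁ i)) A₂

/-!
The nearest point projection onto the closed unit ball of an inner product space is nonexpansive,
and it fixes the origin, so `‖LN x - LN y‖ ≤ ‖x - y‖` and `‖LN y‖ ≤ ‖y‖`. Each of the two matrix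
layers is perturbed through the bilinear splitting `u A - v B = (u - v) A + v (A - B)`, and the
Frobenius norm bounds `‖v A‖`. The elementwise `σ` contributes its Lipschitz constant once per
term, because `σ 0 = 0` also gives `‖σ v‖ ≤ K ‖v‖`.
-/

open Matrix WithLp
open scoped NNReal ENNReal RealInnerProductSpace Matrix.Norms.Frobenius

section Projection

theorem norm_sub_le_norm_sub_of_inner_nonpos {E : Type*} [SeminormedAddCommGroup E]
    [InnerProductSpace ℝ E] {x y p q : E} (hp : ⟪x - p, q - p⟫ ≤ 0) (hq : ⟪y - q, p - q⟫ ≤ 0) :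
    ‖p - q‖ ≤ ‖x - y‖ := by
  have split : ‖p - q‖ ^ 2 = ⟪x - y, p - q⟫ + ⟪x - p, q - p⟫ + ⟪y - q, p - q⟫ := by
    rw [← real_inner_self_eq_norm_sq, ← neg_sub p q, inner_neg_right]
    simp only [inner_sub_left]
    ring
  have sq_le : ‖p - q‖ * ‖p - q‖ ≤ ‖x - y‖ * ‖p - q‖ := by
    linarith [real_inner_le_norm (x - y) (p - q)]
  rcases (norm_nonneg (p - q)).eq_or_lt with h | h
  · exact h ▸ norm_nonneg _
  · exact le_of_mul_le_mul_right sq_le h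

/-- The radial retraction `x ↦ x / max 1 ‖x‖` of a normed space onto its closed unit ball. In an
inner product space it is the nearest point projection; on `ℝⁿ` it is `LN`. -/
noncomputable def unitBallRetraction {E : Type*} [SeminormedAddCommGroup E] [NormedSpace ℝ E]
    (x : E) : E :=
  (max 1 ‖x‖)⁻¹ • x

section NormedSpace

variable {E : Type*} [SeminormedAddCommGroup E] [NormedSpace ℝ E] {x : E}

theorem unitBallRetraction_of_norm_le_one (hx : ‖x‖ ≤ 1) : unitBallRetraction x = x := by
  simp [unitBallRetraction, hx]

theorem unitBallRetraction_of_one_le_norm (hx : 1 ≤ ‖x‖) :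
    unitBallRetraction x = ‖x‖⁻¹ • x := by
  simp [unitBallRetraction, hx]

theorem norm_unitBallRetraction (x : E) : ‖unitBallRetraction x‖ = min 1 ‖x‖ := by
  rcases le_total ‖x‖ 1 with hx | hx
  · rw [unitBallRetraction_of_norm_le_one hx, min_eq_right hx]
  · rw [unitBallRetraction_of_one_le_norm hx, norm_smul, norm_inv, norm_norm,
      inv_mul_cancel₀ (by positivity), min_eq_left hx]

end NormedSpace

variable {E : Type*} [SeminormedAddCommGroup E] [InnerProductSpace ℝ E]

theorem inner_sub_unitBallRetraction_nonpos (x : E) {z : E} (hz : ‖z‖ ≤ 1) :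
    ⟪x - unitBallRetraction x, z - unitBallRetraction x⟫ ≤ 0 := by
  rcases le_total ‖x‖ 1 with hx | hx
  · simp [unitBallRetraction_of_norm_le_one hx]
  · set p := unitBallRetraction x with hp
    have p_norm : ‖p‖ = 1 := by rw [hp, norm_unitBallRetraction, min_eq_left hx]
    have x_eq : x = ‖x‖ • p := by
      rw [hp, unitBallRetraction_of_one_le_norm hx, smul_inv_smul₀ (by positivity)]
    have inner_le : ⟪p, z⟫ ≤ 1 :=
      (real_inner_le_norm p z).trans (by rwa [p_norm, one_mul])
    calc ⟪x - p, z - p⟫ = ⟪(‖x‖ - 1) • p, z - p⟫ := by rw [sub_smul, one_smul, ← x_eq]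
      _ = (‖x‖ - 1) * (⟪p, z⟫ - 1) := by
        rw [real_inner_smul_left, inner_sub_right, real_inner_self_eq_norm_sq, p_norm, one_pow]
      _ ≤ 0 := mul_nonpos_of_nonneg_of_nonpos (by linarith) (by linarith)

theorem norm_unitBallRetraction_sub_le (x y : E) :
    ‖unitBallRetraction x - unitBallRetraction y‖ ≤ ‖x - y‖ :=
  have mem_ball (z : E) : ‖unitBallRetraction z‖ ≤ 1 :=
    (norm_unitBallRetraction z).trans_le (min_le_left _ _)
  norm_sub_le_norm_sub_of_inner_nonpos (inner_sub_unitBallRetraction_nonpos x (mem_ball y))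
    (inner_sub_unitBallRetraction_nonpos y (mem_ball x))

end Projection

section TwoLayer

theorem lipschitzWith_toLp_comp {ι E F : Type*} [Fintype ι] [PseudoEMetricSpace E]
    [PseudoEMetricSpace F] (p : ℝ≥0∞) [Fact (1 ≤ p)] {K : ℝ≥0} {f : E → F}
    (hf : LipschitzWith K f) :
    LipschitzWith K fun v : PiLp p fun _ : ι ↦ E ↦ toLp p (f ∘ v) := by
  intro v w
  rcases eq_or_ne p ∞ with rfl | hp
  · simp only [PiLp.edist_eq_iSup, ENNReal.mul_iSup]
    exact iSup_mono fun i ↦ hf (v i) (w i)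
  · have hp₀ : 0 < p.toReal := ENNReal.toReal_pos (zero_lt_one.trans_le Fact.out).ne' hp
    calc edist (toLp p (f ∘ v)) (toLp p (f ∘ w))
        = (∑ i, edist (f (v i)) (f (w i)) ^ p.toReal) ^ (1 / p.toReal) :=
          PiLp.edist_eq_sum hp₀ _ _
      _ ≤ (∑ i, (K * edist (v i) (w i)) ^ p.toReal) ^ (1 / p.toReal) := by
          gcongr
          exact hf _ _
      _ = K * edist v w := by
          simp only [PiLp.edist_eq_sum hp₀, ENNReal.mul_rpow_of_nonneg _ _ hp₀.le,
            ← Finset.mul_sum]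
          rw [ENNReal.mul_rpow_of_nonneg _ _ (by positivity), ← ENNReal.rpow_mul,
            mul_one_div_cancel hp₀.ne', ENNReal.rpow_one]

variable {𝕜 m n : Type*} [RCLike 𝕜] [Fintype m] [Fintype n]

theorem norm_toLp_vecMul_le (v : m → 𝕜) (A : Matrix m n 𝕜) :
    ‖toLp 2 (v ᵥ* A)‖ ≤ ‖toLp 2 v‖ * ‖A‖ := by
  rw [← frobenius_norm_replicateRow (ι := Unit), ← frobenius_norm_replicateRow (ι := Unit),
    replicateRow_vecMul]
  exact frobenius_norm_mul _ _

theorem norm_toLp_vecMul_sub_vecMul_le (u v : m → 𝕜) (A B : Matrix m n 𝕜) :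
    ‖toLp 2 (u ᵥ* A - v ᵥ* B)‖ ≤ ‖toLp 2 (u - v)‖ * ‖A‖ + ‖toLp 2 v‖ * ‖A - B‖ := by
  have split : u ᵥ* A - v ᵥ* B = (u - v) ᵥ* A + v ᵥ* (A - B) := by
    rw [sub_vecMul, vecMul_sub, sub_add_sub_cancel]
  rw [split, toLp_add]
  exact norm_add_le_of_le (norm_toLp_vecMul_le _ _) (norm_toLp_vecMul_le _ _)

theorem norm_toLp_twoLayer_sub_le {l : Type*} [Fintype l] {K : ℝ≥0} {σ : 𝕜 → 𝕜}
    (hσ : LipschitzWith K σ) (hσ₀ : σ 0 = 0) (u v : l → 𝕜) (A A' : Matrix l m 𝕜)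
    (B B' : Matrix m n 𝕜) :
    ‖toLp 2 ((σ ∘ (u ᵥ* A)) ᵥ* B - (σ ∘ (v ᵥ* A')) ᵥ* B')‖ ≤
      K * (‖A‖ * ‖B‖ * ‖toLp 2 (u - v)‖ + ‖A - A'‖ * ‖B‖ * ‖toLp 2 v‖ +
        ‖A'‖ * ‖B - B'‖ * ‖toLp 2 v‖) := by
  have norm_σ_sub_le (a b : m → 𝕜) : ‖toLp 2 (σ ∘ a - σ ∘ b)‖ ≤ K * ‖toLp 2 (a - b)‖ :=
    (lipschitzWith_toLp_comp 2 hσ).norm_sub_le (toLp 2 a) (toLp 2 b)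
  have norm_σ_le (a : m → 𝕜) : ‖toLp 2 (σ ∘ a)‖ ≤ K * ‖toLp 2 a‖ := by
    have σ_comp_zero : σ ∘ (0 : m → 𝕜) = 0 := funext fun _ ↦ hσ₀
    simpa only [σ_comp_zero, sub_zero] using norm_σ_sub_le a 0
  calc ‖toLp 2 ((σ ∘ (u ᵥ* A)) ᵥ* B - (σ ∘ (v ᵥ* A')) ᵥ* B')‖
      ≤ ‖toLp 2 (σ ∘ (u ᵥ* A) - σ ∘ (v ᵥ* A'))‖ * ‖B‖ +
          ‖toLp 2 (σ ∘ (v ᵥ* A'))‖ * ‖B - B'‖ := norm_toLp_vecMul_sub_vecMul_le _ _ _ _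
    _ ≤ K * ‖toLp 2 (u ᵥ* A - v ᵥ* A')‖ * ‖B‖ + K * ‖toLp 2 (v ᵥ* A')‖ * ‖B - B'‖ := by
        gcongr
        · exact norm_σ_sub_le _ _
        · exact norm_σ_le _
    _ ≤ K * (‖toLp 2 (u - v)‖ * ‖A‖ + ‖toLp 2 v‖ * ‖A - A'‖) * ‖B‖ +
          K * (‖toLp 2 v‖ * ‖A'‖) * ‖B - B'‖ := by
        gcongr
        · exact norm_toLp_vecMul_sub_vecMul_le _ _ _ _
        · exact norm_toLp_vecMul_le _ _
    _ = _ := by ring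

end TwoLayer

theorem l2norm_eq_norm_toLp {n : ℕ} (v : Fin n → ℝ) : l2norm v = ‖toLp 2 v‖ := by
  simp [l2norm, EuclideanSpace.norm_eq]

theorem frobNorm_eq_norm {m n : ℕ} (A : Matrix (Fin m) (Fin n) ℝ) : frobNorm A = ‖A‖ := by
  simp [frobNorm, frobenius_norm_def, Real.sqrt_eq_rpow]

theorem toLp_LN {n : ℕ} (x : Fin n → ℝ) : toLp 2 (LN x) = unitBallRetraction (toLp 2 x) := by
  rw [LN, l2norm_eq_norm_toLp]
  split_ifs with hx
  · rw [unitBallRetraction_of_norm_le_one hx]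
  · rw [unitBallRetraction_of_one_le_norm (not_le.mp hx).le, toLp_smul]

theorem l2norm_LN_le {n : ℕ} (x : Fin n → ℝ) : l2norm (LN x) ≤ l2norm x := by
  simp only [l2norm_eq_norm_toLp, toLp_LN, norm_unitBallRetraction, min_le_right]

theorem l2norm_LN_sub_LN_le {n : ℕ} (x y : Fin n → ℝ) :
    l2norm (LN x - LN y) ≤ l2norm (x - y) := by
  simpa only [l2norm_eq_norm_toLp, toLp_sub, toLp_LN] using norm_unitBallRetraction_sub_le _ _

theorem ffn_lipschitz_general {d dF : ℕ} {K : ℝ≥0} {σ : ℝ → ℝ} (hσ : LipschitzWith K σ)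
    (hσ₀ : σ 0 = 0) (x y : Fin d → ℝ) (A₁ B₁ : Matrix (Fin d) (Fin dF) ℝ)
    (A₂ B₂ : Matrix (Fin dF) (Fin d) ℝ) :
    l2norm (ffn σ x A₁ A₂ - ffn σ y B₁ B₂) ≤
      K * (frobNorm A₁ * frobNorm A₂ * l2norm (x - y) +
        frobNorm (A₁ - B₁) * frobNorm A₂ * l2norm y +
        frobNorm B₁ * frobNorm (A₂ - B₂) * l2norm y) := by
  have LN_sub_le := l2norm_LN_sub_LN_le x y
  have LN_le := l2norm_LN_le y
  simp only [l2norm_eq_norm_toLp, frobNorm_eq_norm] at LN_sub_le LN_le ⊢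
  refine (norm_toLp_twoLayer_sub_le hσ hσ₀ (LN x) (LN y) A₁ B₁ A₂ B₂).trans ?_
  gcongr

/-- **Lipschitz property of the feed-forward module** (Proposition 11.1 of
Zhang et al.). -/
theorem ffn_lipschitz
    (d dF : ℕ) (hd : 0 < d) (hdF : 0 < dF)
    (σ : ℝ → ℝ) (hσ : LipschitzWith 1 σ) (hσ0 : σ 0 = 0)
    (x xt : Fin d → ℝ)
    (A₁ A₁tilde : Matrix (Fin d) (Fin dF) ℝ) (A₂ A₂tilde : Matrix (Fin dF) (Fin d) ℝ) :
    l2norm (ffn σ x A₁ A₂ - ffn σ xt A₁tilde A₂tilde) ≤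
      frobNorm A₁ * frobNorm A₂ * l2norm (x - xt) +
      frobNorm (A₁ - A₁tilde) * frobNorm A₂ * l2norm xt +
      frobNorm A₁tilde * frobNorm (A₂ - A₂tilde) * l2norm xt := by
  simpa only [NNReal.coe_one, one_mul] using
    ffn_lipschitz_general hσ hσ0 x xt A₁ A₁tilde A₂ A₂tilde
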